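/- Tail feasibility (persistence of feasibility along any feasible plan): let h : ℕ, x : X, and let u : ℕ → U be a feasible plan at x, i.e. 0 ≤ l (traj x u k) for all k < h and traj x u h ∈ S. Then for every m ≤ h, the state traj x u m reached after executing the first m controls of the plan is again MPC-feasible for horizon h. -/

import Mathlib

/-- Discrete-time trajectory under dynamics `f`, initial state `x`, controls `u`. -/
def traj {X U : Type*} (f : X → U → X) (x : X) (u : ℕ → U) : ℕ → X
  | 0 => x
  | n + 1 => f (traj f x u n) (u n)

/-- The safe set: states from which some control sequence keeps `l ≥ 0` forever. -/
def safeSet {X U : Type*} (f : X → U → X) (l : X → ℝ) : Set X :=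
  {x | ∃ u : ℕ → U, ∀ n : ℕ, 0 ≤ l (traj f x u n)}

/-- MPC feasibility for planning horizon `h`: some control keeps the constraint satisfied
for the first `h` steps and steers the terminal state into the safe set. -/
def MPCFeasible {X U : Type*} (f : X → U → X) (l : X → ℝ) (h : ℕ) (x : X) : Prop :=
  ∃ u : ℕ → U, (∀ k < h, 0 ≤ l (traj f x u k)) ∧ traj f x u h ∈ safeSet f l

theorem traj_add_aux {X U : Type*} (f : X → U → X) (x : X) (u : ℕ → U) (m n : ℕ) :
    traj f x u (m + n) = traj f (traj f x u m) (fun k => u (m + k)) n := by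
  induction n with
  | zero => rfl
  | succ n ih =>
    show f (traj f x u (m + n)) (u (m + n)) = f _ (u (m + n))
    rw [ih]

theorem traj_congr_aux {X U : Type*} (f : X → U → X) (x : X) (u w : ℕ → U) (n : ℕ)
    (hw : ∀ k < n, w k = u k) : traj f x w n = traj f x u n := by
  induction n with
  | zero => rfl
  | succ n ih =>
    show f (traj f x w n) (w n) = f (traj f x u n) (u n)
    rw [ih (fun k hk => hw k (by omega)), hw n (by omega)]

/-- Tail feasibility: along any feasible plan, each intermediate state reached after
executing the first `m ≤ h` controls is again MPC-feasible for horizon `h`. -/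
theorem mpcFeasible_tail {X U : Type*} (f : X → U → X) (l : X → ℝ)
    (h : ℕ) (x : X) (u : ℕ → U)
    (hCons : ∀ k < h, 0 ≤ l (traj f x u k))
    (hEnd : traj f x u h ∈ safeSet f l) :
    ∀ m ≤ h, MPCFeasible f l h (traj f x u m) := by
  obtain ⟨v, hv⟩ := hEnd
  let w : ℕ → U := fun k => if k < h then u k else v (k - h)
  have hle : ∀ k ≤ h, traj f x w k = traj f x u k := fun k hk =>
    traj_congr_aux f x u w k (fun j hj => if_pos (by omega))
  have hsafe : ∀ k, 0 ≤ l (traj f x w k) := by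
    intro k
    by_cases hk : k < h
    · rw [hle k hk.le]
      exact hCons k hk
    · obtain ⟨n, rfl⟩ := Nat.exists_eq_add_of_le (not_lt.mp hk)
      have hs : (fun k => w (h + k)) = v := by
        funext j
        simp [w]
      rw [traj_add_aux, hle h le_rfl, hs]
      exact hv n
  intro m hm
  rw [← hle m hm]
  refine ⟨fun k => w (m + k), fun k _ => ?_, fun k => w (m + h + k), fun n => ?_⟩
  · rw [← traj_add_aux]
    exact hsafe _
  · rw [← traj_add_aux, ← traj_add_aux]
    exact hsafe _
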